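/- Let ℋ be a finite-dimensional complex Hilbert space, t₀ ≤ t₁, and let H, R : [t₀,t₁] → ℒ(ℋ) be continuous families of self-adjoint operators. Fix ε, δ > 0 and n ∈ ℕ, and let U(t,s) and V(t,s) be the unitary propagators solving iεδ ∂_t U(t,s) = H(t) U(t,s) and iεδ ∂_t V(t,s) = (H(t) + ε^{n+1} R(t)) V(t,s), with U(s,s) = V(s,s) = 1 and U(s,t) := U(t,s)^{−1}, V(s,t) := V(t,s)^{−1}. Then for every positive semidefinite Π₀ ∈ ℒ(ℋ), every O ∈ ℒ(ℋ) and every t ∈ [t₀,t₁]: |tr( (V(t,t₀) Π₀ V(t₀,t) − U(t,t₀) Π₀ U(t₀,t)) O )| ≤ (t−t₀) · (ε^n/δ) · tr(Π₀) · sup_{s∈[t₀,t]} ‖[R(s), U(s,t) O U(t,s)]‖. -/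

import Mathlib

open ContinuousLinearMap

noncomputable section

/-! Put `ρ s = V(s,t₀) Π₀ V(t₀,s)` and `Y s = U(s,t) O U(t,s)`. The scalar function
`s ↦ tr(ρ s * Y s)` interpolates between `tr(U(t,t₀) Π₀ U(t₀,t) O)` at `s = t₀` and
`tr(V(t,t₀) Π₀ V(t₀,t) O)` at `s = t`. Conjugation turns each evolution equation into a commutator
equation, and cyclicity of the trace cancels the unperturbed generator, so the derivative of this
function is the trace of `ρ s` against the commutator of `Y s` with the perturbation alone. Since
`ρ s` is positive with the same trace as `Π₀`, this is at most `tr Π₀` times the norm of the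
commutator, and the mean value inequality concludes. -/

open Set

section Supremum

variable {ι α : Type*} [ConditionallyCompleteLattice α]

theorem le_biSup_of_bddAbove_image {f : ι → α} {s : Set ι} (hf : BddAbove (f '' s)) {i : ι}
    (hi : i ∈ s) : f i ≤ ⨆ j ∈ s, f j := by
  refine le_ciSup₂ (f := fun j (_ : j ∈ s) => f j) (hf.mono ?_) i hi
  rintro _ ⟨_, ⟨j, rfl⟩, hj, rfl⟩
  exact mem_image_of_mem f hj

end Supremum

section Tracial

variable {R M : Type*} [Ring R] [AddCommGroup M]

theorem map_lie_mul_eq_neg_map_mul_lie {φ : R →+ M} (hφ : ∀ x y, φ (x * y) = φ (y * x))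
    (a x y : R) : φ (⁅a, x⁆ * y) = -φ (x * ⁅a, y⁆) := by
  have cyclic : φ (a * (x * y)) = φ (x * (y * a)) := by rw [hφ, mul_assoc]
  simp only [Ring.lie_def, sub_mul, mul_sub, map_sub, mul_assoc, cyclic, neg_sub]

end Tracial

section Propagator

variable {𝕜 𝔸 : Type*} [NontriviallyNormedField 𝕜] [NormedRing 𝔸] [NormedAlgebra 𝕜 𝔸]

/-- `U` is a propagator of the linear evolution equation `∂ₜ U(t,s) = A(t) U(t,s)`, `U(s,s) = 1`,
for times `t ∈ S`. Scalar factors such as `-i/ε` are part of the generator `A`. Of the cocycle law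
`U(t,s) U(s,r) = U(t,r)` only the case `r = t` is recorded, which says `U(s,t) = U(t,s)⁻¹`. -/
structure IsPropagatorOn (A : 𝕜 → 𝔸) (U : 𝕜 → 𝕜 → 𝔸) (S : Set 𝕜) : Prop where
  apply_self : ∀ s, U s s = 1
  mul_swap : ∀ t s, U t s * U s t = 1
  hasDerivAt : ∀ s, ∀ t ∈ S, HasDerivAt (fun τ => U τ s) (A t * U t s) t

namespace IsPropagatorOn

variable {A B : 𝕜 → 𝔸} {U V : 𝕜 → 𝕜 → 𝔸} {S : Set 𝕜} {t : 𝕜}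

theorem mono {S' : Set 𝕜} (hU : IsPropagatorOn A U S) (hS : S' ⊆ S) : IsPropagatorOn A U S' :=
  ⟨hU.apply_self, hU.mul_swap, fun s t ht => hU.hasDerivAt s t (hS ht)⟩

variable [HasSummableGeomSeries 𝔸]

theorem hasDerivAt_right (hU : IsPropagatorOn A U S) (ht : t ∈ S) (s : 𝕜) :
    HasDerivAt (fun τ => U s τ) (-(U s t * A t)) t := by
  let unit (τ : 𝕜) : 𝔸ˣ := ⟨U τ s, U s τ, hU.mul_swap τ s, hU.mul_swap s τ⟩
  have eq_inverse : (fun τ => U s τ) = fun τ => Ring.inverse (U τ s) :=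
    funext fun τ => (Ring.inverse_unit (unit τ)).symm
  rw [eq_inverse]
  refine ((hasFDerivAt_ringInverse (𝕜 := 𝕜) (unit t)).comp_hasDerivAt t
    (hU.hasDerivAt s t ht)).congr_deriv ?_
  change -(U s t * (A t * U t s) * U s t) = -(U s t * A t)
  rw [← mul_assoc, mul_assoc, hU.mul_swap, mul_one]

theorem hasDerivAt_conj (hU : IsPropagatorOn A U S) (ht : t ∈ S) (s : 𝕜) (X : 𝔸) :
    HasDerivAt (fun τ => U τ s * X * U s τ) ⁅A t, U t s * X * U s t⁆ t := by
  refine (((hU.hasDerivAt s t ht).mul_const X).mul (hU.hasDerivAt_right ht s)).congr_deriv ?_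
  rw [Ring.lie_def]
  noncomm_ring

theorem continuousOn_conj (hU : IsPropagatorOn A U S) (s : 𝕜) (X : 𝔸) :
    ContinuousOn (fun τ => U τ s * X * U s τ) S :=
  fun _ ht => (hU.hasDerivAt_conj ht s X).continuousAt.continuousWithinAt

theorem hasDerivAt_map_conj_mul_conj {F : Type*} [NormedAddCommGroup F] [NormedSpace 𝕜 F]
    (hU : IsPropagatorOn A U S) (hV : IsPropagatorOn B V S) {φ : 𝔸 →L[𝕜] F}
    (hφ : ∀ x y, φ (x * y) = φ (y * x)) (ht : t ∈ S) (r s : 𝕜) (X Y : 𝔸) :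
    HasDerivAt (fun τ => φ (V τ r * X * V r τ * (U τ s * Y * U s τ)))
      (-φ (V t r * X * V r t * ⁅B t - A t, U t s * Y * U s t⁆)) t := by
  refine (φ.hasFDerivAt.comp_hasDerivAt t
    ((hV.hasDerivAt_conj ht r X).mul (hU.hasDerivAt_conj ht s Y))).congr_deriv ?_
  have invariant (a x y : 𝔸) : φ (⁅a, x⁆ * y) = -φ (x * ⁅a, y⁆) :=
    map_lie_mul_eq_neg_map_mul_lie (φ := (φ : 𝔸 →+ F)) hφ a x y
  rw [map_add, invariant]
  simp only [Ring.lie_def, sub_mul, mul_sub, map_sub]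
  abel

end IsPropagatorOn

theorem IsPropagatorOn.norm_map_conj_sub_conj_mul_le {𝔸 F : Type*} [NormedRing 𝔸]
    [NormedAlgebra ℝ 𝔸] [HasSummableGeomSeries 𝔸] [NormedAddCommGroup F] [NormedSpace ℝ F]
    {A B : ℝ → 𝔸} {U V : ℝ → ℝ → 𝔸} {a t : ℝ} (hat : a ≤ t)
    (hU : IsPropagatorOn A U (Icc a t)) (hV : IsPropagatorOn B V (Icc a t)) {φ : 𝔸 →L[ℝ] F}
    (hφ : ∀ x y, φ (x * y) = φ (y * x)) {X Y : 𝔸} {C : ℝ}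
    (hC : ∀ s ∈ Icc a t, ‖φ (V s a * X * V a s * ⁅B s - A s, U s t * Y * U t s⁆)‖ ≤ C) :
    ‖φ ((V t a * X * V a t - U t a * X * U a t) * Y)‖ ≤ C * (t - a) := by
  let f (s : ℝ) : F := φ (V s a * X * V a s * (U s t * Y * U t s))
  have endpoints : f t - f a = φ ((V t a * X * V a t - U t a * X * U a t) * Y) := by
    have start : φ (X * (U a t * Y * U t a)) = φ (U t a * X * U a t * Y) := by
      rw [← mul_assoc, hφ]
      simp only [mul_assoc]
    simp only [f, hU.apply_self, hV.apply_self, one_mul, mul_one, start, sub_mul, map_sub]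
  rw [← endpoints]
  exact norm_image_sub_le_of_norm_deriv_le_segment'
    (fun s hs => (hU.hasDerivAt_map_conj_mul_conj hV hφ hs a t X Y).hasDerivWithinAt)
    (fun s hs => (norm_neg _).trans_le (hC s (Ico_subset_Icc_self hs))) t (right_mem_Icc.2 hat)

end Propagator

section Trace

variable {𝕜 E : Type*} [RCLike 𝕜] [NormedAddCommGroup E] [InnerProductSpace 𝕜 E]
  [FiniteDimensional 𝕜 E]

theorem trace_mul_eq_sum_eigenvalues_mul_inner {T : E →ₗ[𝕜] E} (hT : T.IsSymmetric)
    (C : E →ₗ[𝕜] E) :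
    LinearMap.trace 𝕜 E (T * C) =
      ∑ i, (hT.eigenvalues rfl i : 𝕜) *
        inner 𝕜 (hT.eigenvectorBasis rfl i) (C (hT.eigenvectorBasis rfl i)) := by
  rw [LinearMap.trace_mul_comm, LinearMap.trace_eq_sum_inner _ (hT.eigenvectorBasis rfl)]
  simp only [Module.End.mul_apply, hT.apply_eigenvectorBasis, map_smul, inner_smul_right]

theorem norm_trace_mul_le {T : E →L[𝕜] E} (hT : T.IsPositive) (C : E →L[𝕜] E) :
    ‖LinearMap.trace 𝕜 E (T * C).toLinearMap‖ ≤
      RCLike.re (LinearMap.trace 𝕜 E T.toLinearMap) * ‖C‖ := by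
  have hsymm : T.toLinearMap.IsSymmetric := hT.isSymmetric
  let b := hsymm.eigenvectorBasis rfl
  let l := hsymm.eigenvalues rfl
  have eigenvalue_nonneg (i) : 0 ≤ l i := hT.toLinearMap.nonneg_eigenvalues rfl i
  have norm_inner_le (i) : ‖inner 𝕜 (b i) (C (b i))‖ ≤ ‖C‖ := by
    simpa [b.norm_eq_one] using
      (norm_inner_le_norm (b i) (C (b i))).trans
        (mul_le_mul_of_nonneg_left (C.le_opNorm (b i)) (norm_nonneg _))
  calc ‖LinearMap.trace 𝕜 E (T * C).toLinearMap‖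
      = ‖∑ i, (l i : 𝕜) * inner 𝕜 (b i) (C (b i))‖ :=
        congrArg _ (trace_mul_eq_sum_eigenvalues_mul_inner hsymm C.toLinearMap)
    _ ≤ ∑ i, ‖(l i : 𝕜) * inner 𝕜 (b i) (C (b i))‖ := norm_sum_le _ _
    _ ≤ ∑ i, l i * ‖C‖ := Finset.sum_le_sum fun i _ => by
        rw [norm_mul, RCLike.norm_of_nonneg (eigenvalue_nonneg i)]
        exact mul_le_mul_of_nonneg_left (norm_inner_le i) (eigenvalue_nonneg i)
    _ = RCLike.re (LinearMap.trace 𝕜 E T.toLinearMap) * ‖C‖ := by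
        rw [hsymm.re_trace_eq_sum_eigenvalues rfl, Finset.sum_mul]

theorem norm_trace_conj_mul_le [CompleteSpace E] {T : E →L[𝕜] E} (hT : T.IsPositive) {W : E →L[𝕜] E}
    (hW : adjoint W * W = 1) (C : E →L[𝕜] E) :
    ‖LinearMap.trace 𝕜 E (W * T * adjoint W * C).toLinearMap‖ ≤
      RCLike.re (LinearMap.trace 𝕜 E T.toLinearMap) * ‖C‖ := by
  have trace_conj : LinearMap.trace 𝕜 E (W * T * adjoint W).toLinearMap =
      LinearMap.trace 𝕜 E T.toLinearMap := by
    refine (LinearMap.trace_mul_comm 𝕜 (W * T).toLinearMap (adjoint W).toLinearMap).trans ?_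
    rw [← toLinearMap_mul, ← mul_assoc, hW, one_mul]
  exact trace_conj ▸ norm_trace_mul_le (hT.conj_adjoint W) C

variable (𝕜 E) in
/-- The trace of bounded operators as a continuous linear functional, so that it can be
differentiated along a path of operators. -/
def traceCLM : (E →L[𝕜] E) →L[𝕜] 𝕜 :=
  LinearMap.toContinuousLinearMap (LinearMap.trace 𝕜 E ∘ₗ coeLM 𝕜)

theorem traceCLM_mul_comm (X Y : E →L[𝕜] E) : traceCLM 𝕜 E (X * Y) = traceCLM 𝕜 E (Y * X) :=
  LinearMap.trace_mul_comm 𝕜 X.toLinearMap Y.toLinearMap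

end Trace

section AdiabaticGenerator

variable {E : Type*} [NormedAddCommGroup E] [NormedSpace ℂ E]

/-- The generator `-i H(t) / (εδ)` of the evolution equation `i ε δ ∂ₜ U(t,s) = H(t) U(t,s)` on the
adiabatic time scale. -/
def adiabaticGenerator (ε δ : ℝ) (H : ℝ → E →L[ℂ] E) (t : ℝ) : E →L[ℂ] E :=
  (-Complex.I * ((ε : ℂ) * (δ : ℂ))⁻¹) • H t

theorem norm_lie_adiabaticGenerator_sub {ε δ : ℝ} (hε : 0 < ε) (hδ : 0 < δ) (n : ℕ)
    (H R : ℝ → E →L[ℂ] E) (t : ℝ) (Y : E →L[ℂ] E) :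
    ‖⁅adiabaticGenerator ε δ (fun s => H s + ε ^ (n + 1) • R s) t - adiabaticGenerator ε δ H t,
      Y⁆‖ = ε ^ n / δ * ‖⁅R t, Y⁆‖ := by
  have scalar : ‖-Complex.I * ((ε : ℂ) * (δ : ℂ))⁻¹‖ * ε ^ (n + 1) = ε ^ n / δ := by
    simp only [norm_mul, norm_neg, Complex.norm_I, norm_inv, Complex.norm_of_nonneg hε.le,
      Complex.norm_of_nonneg hδ.le]
    field_simp
    ring
  simp only [adiabaticGenerator, ← smul_sub, add_sub_cancel_left, Ring.lie_def, smul_mul_assoc,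
    mul_smul_comm]
  rw [norm_smul, norm_smul, ← mul_assoc, Real.norm_of_nonneg (by positivity), scalar]

end AdiabaticGenerator

section Comparison

variable {ℋ : Type*} [NormedAddCommGroup ℋ] [InnerProductSpace ℂ ℋ] [FiniteDimensional ℂ ℋ]

theorem IsPropagatorOn.norm_trace_conj_sub_conj_mul_le {A B : ℝ → ℋ →L[ℂ] ℋ}
    {U V : ℝ → ℝ → ℋ →L[ℂ] ℋ} {a t : ℝ} (hat : a ≤ t)
    (hU : IsPropagatorOn A U (Icc a t)) (hV : IsPropagatorOn B V (Icc a t))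
    (hVadj : ∀ s, adjoint (V s a) = V a s) {P : ℋ →L[ℂ] ℋ} (hP : P.IsPositive)
    {O : ℋ →L[ℂ] ℋ} {C : ℝ} (hC : ∀ s ∈ Icc a t, ‖⁅B s - A s, U s t * O * U t s⁆‖ ≤ C) :
    ‖LinearMap.trace ℂ ℋ ((V t a * P * V a t - U t a * P * U a t) * O).toLinearMap‖ ≤
      (LinearMap.trace ℂ ℋ P.toLinearMap).re * C * (t - a) := by
  have trace_nonneg : 0 ≤ (LinearMap.trace ℂ ℋ P.toLinearMap).re :=
    (Complex.nonneg_iff.1 hP.toLinearMap.trace_nonneg).1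
  refine hU.norm_map_conj_sub_conj_mul_le hat hV (φ := (traceCLM ℂ ℋ).restrictScalars ℝ)
    traceCLM_mul_comm fun s hs => ?_
  have isometry : adjoint (V s a) * V s a = 1 := by rw [hVadj, hV.mul_swap]
  rw [← hVadj]
  exact (norm_trace_conj_mul_le hP isometry _).trans
    (mul_le_mul_of_nonneg_left (hC s hs) trace_nonneg)

theorem stmt14_general (t₀ t₁ : ℝ) (H R : ℝ → ℋ →L[ℂ] ℋ)
    (hRcont : ContinuousOn R (Icc t₀ t₁)) (ε δ : ℝ) (hε : 0 < ε) (hδ : 0 < δ) (n : ℕ)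
    (U V : ℝ → ℝ → ℋ →L[ℂ] ℋ)
    (hU : IsPropagatorOn (adiabaticGenerator ε δ H) U (Icc t₀ t₁))
    (hV : IsPropagatorOn (adiabaticGenerator ε δ fun s => H s + ε ^ (n + 1) • R s) V (Icc t₀ t₁))
    (hVunit : ∀ u : ℝ, adjoint (V u t₀) = V t₀ u)
    (Pi0 : ℋ →L[ℂ] ℋ) (hPi0 : Pi0.IsPositive)
    (O : ℋ →L[ℂ] ℋ) (t : ℝ) (htmem : t ∈ Icc t₀ t₁) :
    ‖LinearMap.trace ℂ ℋ
        ((V t t₀ * Pi0 * V t₀ t - U t t₀ * Pi0 * U t₀ t) * O).toLinearMap‖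
      ≤ (t - t₀) * (ε ^ n / δ) * (LinearMap.trace ℂ ℋ Pi0.toLinearMap).re
          * ⨆ u ∈ Icc t₀ t, ‖⁅R u, U u t * O * U t u⁆‖ := by
  have hsub : Icc t₀ t ⊆ Icc t₀ t₁ := Icc_subset_Icc_right htmem.2
  replace hU := hU.mono hsub
  have hR : ContinuousOn R (Icc t₀ t) := hRcont.mono hsub
  have hY : ContinuousOn (fun u => U u t * O * U t u) (Icc t₀ t) := hU.continuousOn_conj t O
  have bdd : BddAbove ((fun u => ‖⁅R u, U u t * O * U t u⁆‖) '' Icc t₀ t) :=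
    isCompact_Icc.bddAbove_image ((hR.mul hY).sub (hY.mul hR)).norm
  refine (hU.norm_trace_conj_sub_conj_mul_le htmem.1 (hV.mono hsub) hVunit hPi0
    (C := ε ^ n / δ * ⨆ u ∈ Icc t₀ t, ‖⁅R u, U u t * O * U t u⁆‖) fun s hs => ?_).trans_eq ?_
  · rw [norm_lie_adiabaticGenerator_sub hε hδ]
    exact mul_le_mul_of_nonneg_left (le_biSup_of_bddAbove_image bdd hs) (by positivity)
  · ring

end Comparison

/-- comparison of the propagators of `H(t)` and of `H(t) + ε^{n+1} R(t)` on the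
adiabatic time scale: for every positive semidefinite `Pi0`, every observable `O` and every
`t ∈ [t₀,t₁]`,
`|tr((V(t,t₀)Pi0V(t₀,t) − U(t,t₀)Pi0U(t₀,t)) O)|
   ≤ (t−t₀)·(ε^n/δ)·tr(Pi0)·sup_{s∈[t₀,t]} ‖[R(s), U(s,t) O U(t,s)]‖`. -/
theorem stmt14 {ℋ : Type*} [NormedAddCommGroup ℋ] [InnerProductSpace ℂ ℋ]
    [FiniteDimensional ℂ ℋ]
    (t₀ t₁ : ℝ) (ht : t₀ ≤ t₁)
    (H R : ℝ → ℋ →L[ℂ] ℋ)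
    (hHcont : ContinuousOn H (Set.Icc t₀ t₁)) (hRcont : ContinuousOn R (Set.Icc t₀ t₁))
    (hHsa : ∀ t ∈ Set.Icc t₀ t₁, IsSelfAdjoint (H t))
    (hRsa : ∀ t ∈ Set.Icc t₀ t₁, IsSelfAdjoint (R t))
    (ε δ : ℝ) (hε : 0 < ε) (hδ : 0 < δ) (n : ℕ)
    (U V : ℝ → ℝ → ℋ →L[ℂ] ℋ)
    -- U and V are the unitary propagators of the two evolutions:
    (hUid : ∀ u : ℝ, U u u = 1) (hVid : ∀ u : ℝ, V u u = 1)
    (hUgroup : ∀ t u : ℝ, U t u * U u t = 1) (hVgroup : ∀ t u : ℝ, V t u * V u t = 1)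
    (hUunit : ∀ t u : ℝ, adjoint (U t u) = U u t) (hVunit : ∀ t u : ℝ, adjoint (V t u) = V u t)
    (hU : ∀ u : ℝ, ∀ t ∈ Set.Icc t₀ t₁,
      HasDerivAt (fun τ => U τ u)
        ((-Complex.I * ((ε : ℂ) * (δ : ℂ))⁻¹) • (H t * U t u)) t)
    (hV : ∀ u : ℝ, ∀ t ∈ Set.Icc t₀ t₁,
      HasDerivAt (fun τ => V τ u)
        ((-Complex.I * ((ε : ℂ) * (δ : ℂ))⁻¹) • ((H t + ε ^ (n + 1) • R t) * V t u)) t)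
    (Pi0 : ℋ →L[ℂ] ℋ) (hPi0 : Pi0.IsPositive)
    (O : ℋ →L[ℂ] ℋ) (t : ℝ) (htmem : t ∈ Set.Icc t₀ t₁) :
    ‖LinearMap.trace ℂ ℋ
        ((V t t₀ * Pi0 * V t₀ t - U t t₀ * Pi0 * U t₀ t) * O).toLinearMap‖
      ≤ (t - t₀) * (ε ^ n / δ) * (LinearMap.trace ℂ ℋ Pi0.toLinearMap).re
          * ⨆ u ∈ Set.Icc t₀ t, ‖R u * (U u t * O * U t u) - (U u t * O * U t u) * R u‖ :=
  stmt14_general t₀ t₁ H R hRcont ε δ hε hδ n U V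
    ⟨hUid, hUgroup, fun u s hs => (hU u s hs).congr_deriv (smul_mul_assoc _ _ _).symm⟩
    ⟨hVid, hVgroup, fun u s hs => (hV u s hs).congr_deriv (smul_mul_assoc _ _ _).symm⟩
    (hVunit · t₀) Pi0 hPi0 O t htmem
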